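/- Let $\Omega \subset \mathbb{R}^N$ be a bounded domain, $\alpha, \beta \in (0,1)$, $T > 0$, and let $u$ be a function $C^2$ in $x$, $C^1$ in $t$ on $\Omega \times (0,T)$, continuous on $\bar{\Omega} \times [0,T]$, vanishing outside $\Omega$. If $\partial_t^\alpha(u - u_0) + (-\Delta)^\beta u \leq 0$ in $\Omega \times (0,T]$, where $u_0 = u(\cdot,0)$, then $\max_{\bar{Q}_T} u = \max_{\partial_p Q_T} u$, where $Q_T = \Omega \times (0,T)$ and $\partial_p Q_T = (\Omega \times \{0\}) \cup (\partial\Omega \times [0,T])$. -/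

import Mathlib

open MeasureTheory Set

noncomputable section

/-- Laplace convolution on `[0,t]`. -/
def tconv (k u : ℝ → ℝ) (t : ℝ) : ℝ := ∫ s in Set.Ioc 0 t, k (t - s) * u s

/-- Riemann–Liouville fractional derivative of order `α`. -/
def riemannLiouville (α : ℝ) (v : ℝ → ℝ) (t : ℝ) : ℝ :=
  deriv (tconv (fun s => s ^ (-α) / Real.Gamma (1 - α)) v) t

/-- The normalizing constant `c_{N,β}` of the fractional Laplacian. -/
def fracLapConst (N : ℕ) (β : ℝ) : ℝ :=
  β * 2 ^ (2 * β) * Real.Gamma ((N + 2 * β) / 2) /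
    (Real.pi ^ ((N : ℝ) / 2) * Real.Gamma (1 - β))

/-- The fractional Laplacian `(-Δ)^β`. -/
def fracLap (N : ℕ) (β : ℝ) (v : EuclideanSpace ℝ (Fin N) → ℝ)
    (x : EuclideanSpace ℝ (Fin N)) : ℝ :=
  fracLapConst N β * ∫ y, (v x - v y) / ‖x - y‖ ^ ((N : ℝ) + 2 * β)

/-!
At a time `t` where `v` attains its maximum over `[0, t]`, write `v = v t - w` with `0 ≤ w` and
`w s = O(t - s)`. The constant contributes `v t * k t` to the derivative of `tconv k v`. For `w`,
passing from an earlier time to `t` decreases the weights `k (t - s)` on the old interval because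
`k` is antitone, and adds only `o(1)` times the length of the new interval because `k` is
integrable at `0`; hence the contribution of `-w` is nonnegative. So the Riemann–Liouville
derivative of `u - u(·, 0)` is positive at an interior maximum exceeding the initial value, where
the fractional Laplacian is nonnegative, contradicting the subsolution inequality.

The convolution is differentiable at `t` although `v` is only continuous away from `t`: cut `v` off
near `t` and differentiate the `C¹` factor in the localized part, and the kernel, which is then
only evaluated away from its singularity, in the remainder.
-/

open Filter Topology Function

section Localization

variable {E F : Type*} [NormedAddCommGroup E] [NormedSpace ℝ E] [FiniteDimensional ℝ E]
  [NormedAddCommGroup F] [NormedSpace ℝ F]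

lemma exists_contDiff_hasCompactSupport_eventuallyEq {n : ℕ} {v : E → F} {x : E} {U : Set E}
    (hv : ContDiffAt ℝ n v x) (hU : U ∈ 𝓝 x) :
    ∃ g : E → F, ContDiff ℝ n g ∧ HasCompactSupport g ∧ support g ⊆ U ∧ g =ᶠ[𝓝 x] v := by
  obtain ⟨r, hr, hball⟩ :=
    Metric.mem_nhds_iff.1 (inter_mem hU (hv.eventually (by simp)))
  let φ : ContDiffBump x := ⟨r / 3, r / 2, by positivity, by linarith⟩
  have hsupp : tsupport φ ⊆ Metric.ball x r := by
    rw [φ.tsupport_eq]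
    exact Metric.closedBall_subset_ball (half_lt_self hr)
  refine ⟨fun y => φ y • v y, contDiff_iff_contDiffAt.2 fun y => ?_,
    φ.hasCompactSupport.smul_right, fun y hy => ?_,
    φ.eventuallyEq_one.mono fun y hy => by simp [hy]⟩
  · by_cases hy : y ∈ tsupport φ
    · exact φ.contDiffAt.smul (hball (hsupp hy)).2
    · refine (contDiffAt_const (c := (0 : F))).congr_of_eventuallyEq ?_
      filter_upwards [notMem_tsupport_iff_eventuallyEq.1 hy] with z hz
      rw [hz, Pi.zero_apply, zero_smul]
  · exact (hball (hsupp (subset_tsupport _ (support_smul_subset_left _ _ hy)))).1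

end Localization

section Convolution

variable {k v w : ℝ → ℝ} {a b t t₀ T : ℝ}

lemma integrableOn_comp_sub_left_mul (hk : LocallyIntegrable k) (hv : ContinuousOn v (Icc a b))
    (t : ℝ) : IntegrableOn (fun s => k (t - s) * v s) (Icc a b) := by
  refine IntegrableOn.mul_continuousOn ?_ hv isCompact_Icc
  have hrefl : Icc a b = (t - ·) ⁻¹' Icc (t - b) (t - a) := by simp
  rw [hrefl]
  exact ((Measure.measurePreserving_sub_left volume t).integrableOn_comp_preimage
    (Homeomorph.subLeft t).measurableEmbedding).2 (hk.integrableOn_isCompact isCompact_Icc)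

lemma tconv_sub (hk : LocallyIntegrable k) (hv : ContinuousOn v (Icc 0 t))
    (hw : ContinuousOn w (Icc 0 t)) :
    tconv k (fun s => v s - w s) t = tconv k v t - tconv k w t := by
  simp only [tconv, mul_sub]
  exact integral_sub ((integrableOn_comp_sub_left_mul hk hv t).mono_set Ioc_subset_Icc_self)
    ((integrableOn_comp_sub_left_mul hk hw t).mono_set Ioc_subset_Icc_self)

lemma tconv_const (k : ℝ → ℝ) (m : ℝ) (ht : 0 ≤ t) :
    tconv k (fun _ => m) t = (∫ s in (0 : ℝ)..t, k s) * m := by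
  rw [tconv, integral_mul_const, ← intervalIntegral.integral_of_le ht,
    intervalIntegral.integral_comp_sub_left, sub_self, sub_zero]

lemma hasDerivAt_tconv_const (hk : LocallyIntegrable k) (hkc : ContinuousOn k (Ioi 0))
    (m : ℝ) (ht₀ : 0 < t₀) : HasDerivAt (tconv k fun _ => m) (k t₀ * m) t₀ := by
  have hprim : HasDerivAt (fun t => ∫ s in (0 : ℝ)..t, k s) (k t₀) t₀ :=
    intervalIntegral.integral_hasDerivAt_right
      (hk.integrableOn_isCompact isCompact_uIcc).intervalIntegrable
      (hkc.stronglyMeasurableAtFilter isOpen_Ioi _ ht₀) (hkc.continuousAt (Ioi_mem_nhds ht₀))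
  refine (hprim.mul_const m).congr_of_eventuallyEq ?_
  filter_upwards [Ioi_mem_nhds ht₀] with t ht using tconv_const k m (le_of_lt ht)

lemma tconv_eq_convolution (k : ℝ → ℝ) (hv : support v ⊆ Ioi 0) :
    tconv k v = convolution ((Ici 0).indicator k) v (ContinuousLinearMap.mul ℝ ℝ) volume := by
  funext t
  rw [convolution_mul_swap, tconv, ← integral_indicator measurableSet_Ioc]
  congr 1
  ext s
  by_cases hs : s ∈ support v
  · have hs₀ : 0 < s := hv hs
    simp [indicator, hs₀]
  · rw [notMem_support] at hs
    simp [indicator, hs]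

lemma differentiable_tconv_of_hasCompactSupport (hk : LocallyIntegrable k) (hv : ContDiff ℝ 1 v)
    (hv_compact : HasCompactSupport v) (hv_supp : support v ⊆ Ioi 0) :
    Differentiable ℝ (tconv k v) := by
  rw [tconv_eq_convolution k hv_supp]
  exact fun t => (hv_compact.hasDerivAt_convolution_right (ContinuousLinearMap.mul ℝ ℝ)
    (hk.indicator measurableSet_Ici) hv t).differentiableAt

lemma differentiableAt_integral_comp_sub_left_mul (hk : ContDiffOn ℝ 1 k (Ioi 0))
    (hw : IntegrableOn w (Icc a b)) (hb : b < t₀) :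
    DifferentiableAt ℝ (fun t => ∫ s in Icc a b, k (t - s) * w s) t₀ := by
  obtain ⟨c, hbc, hct⟩ := exists_between hb
  have hderiv_cont : ContinuousOn (deriv k) (Ioi 0) :=
    hk.continuousOn_deriv_of_isOpen isOpen_Ioi le_rfl
  obtain ⟨B, hB⟩ := (isCompact_Icc (a := c - b) (b := t₀ + 1 - a)).exists_bound_of_continuousOn
    (hderiv_cont.mono fun r hr => (sub_pos.2 hbc).trans_le hr.1)
  have hnhds : Ioo c (t₀ + 1) ∈ 𝓝 t₀ := Ioo_mem_nhds hct (lt_add_one t₀)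
  have integrable_mul {f : ℝ → ℝ} (hf : ContinuousOn f (Ioi 0)) {t : ℝ} (ht : c < t) :
      IntegrableOn (fun s => f (t - s) * w s) (Icc a b) := by
    refine hw.continuousOn_mul (hf.comp (by fun_prop) fun s hs => ?_) isCompact_Icc
    exact sub_pos.2 (hs.2.trans_lt (hbc.trans ht))
  refine (hasDerivAt_integral_of_dominated_loc_of_deriv_le
    (μ := volume.restrict (Icc a b)) (F := fun t s => k (t - s) * w s)
    (F' := fun t s => deriv k (t - s) * w s) (bound := fun s => B * ‖w s‖) hnhds ?_
    (integrable_mul hk.continuousOn hct)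
    (integrable_mul hderiv_cont hct).aestronglyMeasurable ?_ (hw.norm.const_mul B)
    ?_).2.differentiableAt
  · filter_upwards [hnhds] with t ht
    exact (integrable_mul hk.continuousOn ht.1).aestronglyMeasurable
  · filter_upwards [ae_restrict_mem measurableSet_Icc] with s hs t ht
    rw [norm_mul]
    gcongr
    exact hB _ ⟨by linarith [hs.2, ht.1], by linarith [hs.1, ht.2]⟩
  · filter_upwards [ae_restrict_mem measurableSet_Icc] with s hs t ht
    have hpos : 0 < t - s := sub_pos.2 (hs.2.trans_lt (hbc.trans ht.1))
    exact (((hk.differentiableOn one_ne_zero).differentiableAt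
      (Ioi_mem_nhds hpos)).hasDerivAt.comp_sub_const t s).mul_const _

lemma differentiableAt_tconv_of_eventuallyEq_zero (hk : ContDiffOn ℝ 1 k (Ioi 0))
    (hw : ContinuousOn w (Icc 0 t₀)) (hw₀ : w =ᶠ[𝓝 t₀] 0) (ht₀ : 0 < t₀) :
    DifferentiableAt ℝ (tconv k w) t₀ := by
  obtain ⟨b, c, ⟨hb, hc⟩, hbc⟩ := mem_nhds_iff_exists_Ioo_subset.1 hw₀
  obtain ⟨d, hd, hdt⟩ := exists_between (max_lt hb ht₀)
  have hdiff : DifferentiableAt ℝ (fun t => ∫ s in Icc 0 d, k (t - s) * w s) t₀ :=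
    differentiableAt_integral_comp_sub_left_mul hk
      (hw.mono (Icc_subset_Icc_right hdt.le)).integrableOn_Icc hdt
  refine hdiff.congr_of_eventuallyEq ?_
  filter_upwards [Ioo_mem_nhds hdt hc] with t ht
  rw [tconv, ← integral_Icc_eq_integral_Ioc]
  refine setIntegral_eq_of_subset_of_forall_sdiff_eq_zero measurableSet_Icc
    (Icc_subset_Icc_right ht.1.le) fun s ⟨hst, hsd⟩ => ?_
  have hds : d < s := lt_of_not_ge fun h => hsd ⟨hst.1, h⟩
  have hws : w s = 0 := hbc ⟨(le_max_left b 0).trans_lt (hd.trans hds), hst.2.trans_lt ht.2⟩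
  rw [hws, mul_zero]

lemma differentiableAt_tconv (hk : LocallyIntegrable k) (hk_diff : ContDiffOn ℝ 1 k (Ioi 0))
    (hv : ContinuousOn v (Icc 0 T)) (ht₀ : t₀ ∈ Ioo 0 T) (hv_diff : ContDiffAt ℝ 1 v t₀) :
    DifferentiableAt ℝ (tconv k v) t₀ := by
  obtain ⟨g, hg, hg_compact, hg_supp, hgv⟩ :=
    exists_contDiff_hasCompactSupport_eventuallyEq (n := 1) hv_diff (Ioi_mem_nhds ht₀.1)
  have hg_tconv : DifferentiableAt ℝ (tconv k g) t₀ :=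
    differentiable_tconv_of_hasCompactSupport hk hg hg_compact hg_supp t₀
  have hsub_tconv : DifferentiableAt ℝ (tconv k fun s => v s - g s) t₀ :=
    differentiableAt_tconv_of_eventuallyEq_zero hk_diff
      ((hv.mono (Icc_subset_Icc_right ht₀.2.le)).sub hg.continuous.continuousOn)
      (hgv.mono fun s hs => sub_eq_zero.2 hs.symm) ht₀.1
  refine (hsub_tconv.add hg_tconv).congr_of_eventuallyEq ?_
  filter_upwards [Iio_mem_nhds ht₀.2] with t ht
  rw [Pi.add_apply, tconv_sub hk (hv.mono (Icc_subset_Icc_right (le_of_lt ht)))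
    hg.continuous.continuousOn, sub_add_cancel]

lemma tconv_le_tconv_add (hk : LocallyIntegrable k) (hk_anti : AntitoneOn k (Ioi 0))
    (hw : ContinuousOn w (Icc 0 t₀)) (hw₀ : ∀ s ∈ Icc 0 t, 0 ≤ w s) (ht : t ∈ Icc 0 t₀) :
    tconv k w t₀ ≤ tconv k w t + ∫ s in Ioc t t₀, k (t₀ - s) * w s := by
  have integrable_on_Ioc {a b : ℝ} (hab : Icc a b ⊆ Icc 0 t₀) (r : ℝ) :
      IntegrableOn (fun s => k (r - s) * w s) (Ioc a b) :=
    (integrableOn_comp_sub_left_mul hk (hw.mono hab) r).mono_set Ioc_subset_Icc_self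
  have hold : Icc 0 t ⊆ Icc 0 t₀ := Icc_subset_Icc_right ht.2
  have hsplit : tconv k w t₀ =
      (∫ s in Ioc 0 t, k (t₀ - s) * w s) + ∫ s in Ioc t t₀, k (t₀ - s) * w s := by
    rw [tconv, ← Ioc_union_Ioc_eq_Ioc ht.1 ht.2]
    exact setIntegral_union (Ioc_disjoint_Ioc_of_le le_rfl) measurableSet_Ioc
      (integrable_on_Ioc hold t₀) (integrable_on_Ioc (Icc_subset_Icc_left ht.1) t₀)
  have hmono : ∫ s in Ioc 0 t, k (t₀ - s) * w s ≤ tconv k w t := by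
    rw [tconv, integral_Ioc_eq_integral_Ioo, integral_Ioc_eq_integral_Ioo]
    refine setIntegral_mono_on ((integrable_on_Ioc hold t₀).mono_set Ioo_subset_Ioc_self)
      ((integrable_on_Ioc hold t).mono_set Ioo_subset_Ioc_self) measurableSet_Ioo fun s hs => ?_
    have hst : 0 < t - s := sub_pos.2 hs.2
    have hst₀ : t - s ≤ t₀ - s := sub_le_sub_right ht.2 s
    exact mul_le_mul_of_nonneg_right (hk_anti hst (hst.trans_le hst₀) hst₀)
      (hw₀ s (Ioo_subset_Icc_self hs))
  rw [hsplit]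
  gcongr

lemma setIntegral_comp_sub_left_mul_le (hk : LocallyIntegrable k) (hk₀ : ∀ s > 0, 0 ≤ k s)
    (hw : ContinuousOn w (Icc t t₀)) (ht : t ≤ t₀) {c : ℝ} (hwc : ∀ s ∈ Ioo t t₀, w s ≤ c) :
    ∫ s in Ioc t t₀, k (t₀ - s) * w s ≤ (∫ s in (0 : ℝ)..t₀ - t, k s) * c := by
  have hprim : (∫ s in (0 : ℝ)..t₀ - t, k s) * c = ∫ s in Ioc t t₀, k (t₀ - s) * c := by
    rw [integral_mul_const, ← intervalIntegral.integral_of_le ht,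
      intervalIntegral.integral_comp_sub_left, sub_self]
  rw [hprim, integral_Ioc_eq_integral_Ioo, integral_Ioc_eq_integral_Ioo]
  refine setIntegral_mono_on
    ((integrableOn_comp_sub_left_mul hk hw t₀).mono_set Ioo_subset_Icc_self)
    ((integrableOn_comp_sub_left_mul hk continuousOn_const t₀).mono_set Ioo_subset_Icc_self)
    measurableSet_Ioo fun s hs => ?_
  exact mul_le_mul_of_nonneg_left (hwc s hs) (hk₀ _ (sub_pos.2 hs.2))

lemma nonpos_of_hasDerivAt_tconv (hk : LocallyIntegrable k) (hk_anti : AntitoneOn k (Ioi 0))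
    (hk₀ : ∀ s > 0, 0 ≤ k s) (ht₀ : 0 < t₀) (hw : ContinuousOn w (Icc 0 t₀))
    (hw₀ : ∀ s ∈ Icc 0 t₀, 0 ≤ w s) (hwt₀ : w t₀ = 0) (hw_diff : DifferentiableAt ℝ w t₀)
    {D : ℝ} (hD : HasDerivAt (tconv k w) D t₀) : D ≤ 0 := by
  obtain ⟨C, hC₀, hC⟩ := hw_diff.isBigO_sub.exists_pos
  obtain ⟨a, ha, hCa⟩ := mem_nhdsLT_iff_exists_Ioo_subset.1 (nhdsWithin_le_nhds hC.bound)
  have hslope : ∀ t ∈ Ioo (max 0 a) t₀,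
      slope (tconv k w) t₀ t ≤ (∫ s in (0 : ℝ)..t₀ - t, k s) * C := by
    intro t ⟨hat, ht⟩
    have ht_mem : t ∈ Icc 0 t₀ := ⟨(le_max_left 0 a).trans hat.le, ht.le⟩
    have hw_le : ∀ s ∈ Ioo t t₀, w s ≤ C * (t₀ - t) := fun s hs => calc
      w s ≤ C * |s - t₀| := by
        have hbound : ‖w s - w t₀‖ ≤ C * ‖s - t₀‖ :=
          hCa ⟨(le_max_right 0 a).trans_lt (hat.trans hs.1), hs.2⟩
        rw [hwt₀, sub_zero] at hbound
        exact (le_abs_self (w s)).trans hbound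
      _ ≤ C * (t₀ - t) := by
        rw [abs_sub_comm, abs_of_nonneg (sub_nonneg.2 hs.2.le)]
        gcongr
        exact hs.1.le
    rw [slope_comm, slope_def_field, div_le_iff₀ (sub_pos.2 ht), sub_le_iff_le_add', mul_assoc]
    have hw₀t : ∀ s ∈ Icc 0 t, 0 ≤ w s := fun s hs => hw₀ s ⟨hs.1, hs.2.trans ht.le⟩
    exact (tconv_le_tconv_add hk hk_anti hw hw₀t ht_mem).trans <| by
      gcongr
      exact setIntegral_comp_sub_left_mul_le hk hk₀
        (hw.mono (Icc_subset_Icc_left ht_mem.1)) ht.le hw_le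
  have hprim : Tendsto (fun t => (∫ s in (0 : ℝ)..t₀ - t, k s) * C) (𝓝[<] t₀) (𝓝 0) := by
    have hcont : Continuous fun t => (∫ s in (0 : ℝ)..t₀ - t, k s) * C :=
      ((intervalIntegral.continuous_primitive (fun _ _ =>
        (hk.integrableOn_isCompact isCompact_uIcc).intervalIntegrable) 0).comp
          (continuous_sub_left t₀)).mul_const C
    simpa using (hcont.tendsto t₀).mono_left nhdsWithin_le_nhds
  refine le_of_tendsto_of_tendsto (hasDerivAt_iff_tendsto_slope_left_right.1 hD).1 hprim ?_
  filter_upwards [Ioo_mem_nhdsLT (max_lt ht₀ ha)] with t ht using hslope t ht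

lemma kernel_mul_le_deriv_tconv_of_isMaxOn (hk : LocallyIntegrable k)
    (hk_diff : ContDiffOn ℝ 1 k (Ioi 0)) (hk_anti : AntitoneOn k (Ioi 0))
    (hk₀ : ∀ s > 0, 0 ≤ k s) (hv : ContinuousOn v (Icc 0 T)) (ht₀ : t₀ ∈ Ioo 0 T)
    (hv_diff : ContDiffAt ℝ 1 v t₀) (hmax : IsMaxOn v (Icc 0 t₀) t₀) :
    k t₀ * v t₀ ≤ deriv (tconv k v) t₀ := by
  have hv₀ : ContinuousOn v (Icc 0 t₀) := hv.mono (Icc_subset_Icc_right ht₀.2.le)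
  have hconst : HasDerivAt (tconv k fun _ => v t₀) (k t₀ * v t₀) t₀ :=
    hasDerivAt_tconv_const hk hk_diff.continuousOn (v t₀) ht₀.1
  have hgap : HasDerivAt (tconv k fun s => v t₀ - v s)
      (k t₀ * v t₀ - deriv (tconv k v) t₀) t₀ := by
    refine (hconst.sub (differentiableAt_tconv hk hk_diff hv ht₀
      hv_diff).hasDerivAt).congr_of_eventuallyEq ?_
    filter_upwards [Iio_mem_nhds ht₀.2] with t ht
    exact tconv_sub hk continuousOn_const (hv.mono (Icc_subset_Icc_right (le_of_lt ht)))
  exact sub_nonpos.1 <| nonpos_of_hasDerivAt_tconv hk hk_anti hk₀ ht₀.1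
    (continuousOn_const.sub hv₀) (fun s hs => sub_nonneg.2 (hmax hs)) (sub_self _)
    ((hv_diff.differentiableAt one_ne_zero).const_sub _) hgap

end Convolution

section RiemannLiouville

variable {α T t : ℝ} {v : ℝ → ℝ}

/-- The Abel kernel of order `α`, whose convolution with `v` is differentiated in
`riemannLiouville α v`. -/
def abelKernel (α s : ℝ) : ℝ := s ^ (-α) / Real.Gamma (1 - α)

lemma abelKernel_pos (hα : α < 1) {s : ℝ} (hs : 0 < s) : 0 < abelKernel α s :=
  div_pos (Real.rpow_pos_of_pos hs _) (Real.Gamma_pos_of_pos (sub_pos.2 hα))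

lemma locallyIntegrable_abelKernel (hα : α < 1) : LocallyIntegrable (abelKernel α) := fun r =>
  ⟨Icc (r - 1) (r + 1), Icc_mem_nhds (sub_one_lt r) (lt_add_one r),
    (intervalIntegrable_iff_integrableOn_Icc_of_le (by linarith)).1
      ((intervalIntegral.intervalIntegrable_rpow' (neg_lt_neg hα)).div_const _)⟩

lemma contDiffOn_abelKernel (α : ℝ) : ContDiffOn ℝ 1 (abelKernel α) (Ioi 0) := fun _ hs =>
  ((Real.contDiffAt_rpow_const_of_ne (ne_of_gt hs)).div_const _).contDiffWithinAt

lemma antitoneOn_abelKernel (hα : α ∈ Ico 0 1) : AntitoneOn (abelKernel α) (Ioi 0) :=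
  fun _ hs _ _ hst => div_le_div_of_nonneg_right
    (Real.rpow_le_rpow_of_nonpos hs hst (neg_nonpos.2 hα.1))
    (Real.Gamma_pos_of_pos (sub_pos.2 hα.2)).le

lemma abelKernel_mul_le_riemannLiouville_of_isMaxOn (hα : α ∈ Ico 0 1)
    (hv : ContinuousOn v (Icc 0 T)) (ht : t ∈ Ioo 0 T) (hv_diff : ContDiffAt ℝ 1 v t)
    (hmax : IsMaxOn v (Icc 0 t) t) : abelKernel α t * v t ≤ riemannLiouville α v t :=
  kernel_mul_le_deriv_tconv_of_isMaxOn (locallyIntegrable_abelKernel hα.2)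
    (contDiffOn_abelKernel α) (antitoneOn_abelKernel hα) (fun _ hs => (abelKernel_pos hα.2 hs).le)
    hv ht hv_diff hmax

end RiemannLiouville

section FractionalLaplacian

variable {N : ℕ} {β : ℝ}

lemma fracLapConst_pos (N : ℕ) (hβ : β ∈ Ioo 0 1) : 0 < fracLapConst N β := by
  have hβ₀ : 0 < β := hβ.1
  have hΓ : 0 < Real.Gamma (1 - β) := Real.Gamma_pos_of_pos (sub_pos.2 hβ.2)
  unfold fracLapConst
  positivity

-- A divergent integral has the junk value `0` here, although its true value is `+∞`.
lemma fracLap_nonneg_of_isMaxOn (hβ : β ∈ Ioo 0 1) {v : EuclideanSpace ℝ (Fin N) → ℝ}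
    {x : EuclideanSpace ℝ (Fin N)} (hmax : IsMaxOn v univ x) : 0 ≤ fracLap N β v x :=
  mul_nonneg (fracLapConst_pos N hβ).le <| integral_nonneg fun y =>
    div_nonneg (sub_nonneg.2 (hmax (mem_univ y))) (Real.rpow_nonneg (norm_nonneg _) _)

end FractionalLaplacian

section MaximumPrinciple

variable {N : ℕ} {α β T M : ℝ} {Ω : Set (EuclideanSpace ℝ (Fin N))}
  {u : EuclideanSpace ℝ (Fin N) → ℝ → ℝ}

/-- The parabolic boundary of the cylinder `Ω × (0, T)`. Its bottom is taken over `Ω` rather than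
`closure Ω`; the missing edge lies in the lateral part. -/
def parabolicBoundary {E : Type*} [TopologicalSpace E] (Ω : Set E) (T : ℝ) : Set (E × ℝ) :=
  Ω ×ˢ {0} ∪ frontier Ω ×ˢ Icc 0 T

lemma parabolicBoundary_subset {E : Type*} [TopologicalSpace E] (Ω : Set E) (hT : 0 ≤ T) :
    parabolicBoundary Ω T ⊆ closure Ω ×ˢ Icc 0 T :=
  union_subset (prod_mono subset_closure (singleton_subset_iff.2 ⟨le_rfl, hT⟩))
    (prod_mono frontier_subset_closure Subset.rfl)

lemma bddAbove_image_closure_prod_Icc {E : Type*} [PseudoMetricSpace E] [ProperSpace E] {Ω : Set E}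
    (hΩ : Bornology.IsBounded Ω) {f : E × ℝ → ℝ} (hf : ContinuousOn f (closure Ω ×ˢ Icc 0 T)) :
    BddAbove (f '' (closure Ω ×ˢ Icc 0 T)) :=
  ((hΩ.isCompact_closure.prod isCompact_Icc).image_of_continuousOn hf).bddAbove

lemma nonempty_frontier_of_isBounded {E : Type*} [NormedAddCommGroup E] [NormedSpace ℝ E]
    [Nontrivial E] {s : Set E} (hs : Bornology.IsBounded s) (hne : s.Nonempty) :
    (frontier s).Nonempty :=
  nonempty_frontier_iff.2 ⟨hne, fun h => NormedSpace.unbounded_univ ℝ E (h ▸ hs)⟩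

lemma le_initial_of_isMaxOn (hα : α ∈ Ico 0 1) (hβ : β ∈ Ioo 0 1)
    {x : EuclideanSpace ℝ (Fin N)} {t : ℝ} (ht : t ∈ Ioo 0 T)
    (hu : ContinuousOn (u x) (Icc 0 T)) (hu_diff : ContDiffAt ℝ 1 (u x) t)
    (hmax_time : IsMaxOn (u x) (Icc 0 t) t) (hmax_space : IsMaxOn (u · t) univ x)
    (hineq : riemannLiouville α (fun s => u x s - u x 0) t + fracLap N β (u · t) x ≤ 0) :
    u x t ≤ u x 0 := by
  have hRL : abelKernel α t * (u x t - u x 0) ≤ riemannLiouville α (fun s => u x s - u x 0) t :=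
    abelKernel_mul_le_riemannLiouville_of_isMaxOn hα (hu.sub continuousOn_const) ht
      (hu_diff.sub contDiffAt_const) fun s hs => sub_le_sub_right (hmax_time hs) (u x 0)
  have hFL : 0 ≤ fracLap N β (u · t) x := fracLap_nonneg_of_isMaxOn hβ hmax_space
  have hprod : abelKernel α t * (u x t - u x 0) ≤ 0 := by linarith
  exact sub_nonpos.1 (nonpos_of_mul_nonpos_right hprod (abelKernel_pos hα.2 ht.1))

lemma subsolution_le_of_mem_Ico (hα : α ∈ Ico 0 1) (hβ : β ∈ Ioo 0 1) (hΩ : Bornology.IsBounded Ω)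
    (hu_diff : ∀ x ∈ Ω, ContDiffOn ℝ 1 (u x) (Ioo 0 T))
    (hu : ContinuousOn (uncurry u) (closure Ω ×ˢ Icc 0 T))
    (hineq : ∀ x ∈ Ω, ∀ t ∈ Ioo 0 T,
      riemannLiouville α (fun s => u x s - u x 0) t + fracLap N β (u · t) x ≤ 0)
    (hinit : ∀ x ∈ Ω, u x 0 ≤ M) (hext : ∀ x ∉ Ω, ∀ t ∈ Ico 0 T, u x t ≤ M)
    {x : EuclideanSpace ℝ (Fin N)} (hx : x ∈ closure Ω) {t : ℝ} (ht : t ∈ Ico 0 T) :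
    u x t ≤ M := by
  by_contra! hM
  obtain ⟨⟨x₀, t₀⟩, ⟨hx₀, ht₀⟩, hmax⟩ :=
    (hΩ.isCompact_closure.prod (isCompact_Icc (a := (0 : ℝ)) (b := t))).exists_isMaxOn
      ⟨(x, t), hx, ht.1, le_rfl⟩ (hu.mono (prod_mono_right (Icc_subset_Icc_right ht.2.le)))
  have hle : ∀ y ∈ closure Ω, ∀ s ∈ Icc 0 t, u y s ≤ u x₀ t₀ :=
    fun y hy s hs => hmax (mk_mem_prod hy hs)
  have hM₀ : M < u x₀ t₀ := hM.trans_le (hle x hx t ⟨ht.1, le_rfl⟩)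
  have ht₀T : t₀ ∈ Ico 0 T := ⟨ht₀.1, ht₀.2.trans_lt ht.2⟩
  have hx₀Ω : x₀ ∈ Ω := by
    by_contra h
    exact (hext x₀ h t₀ ht₀T).not_gt hM₀
  have ht₀_pos : 0 < t₀ := by
    refine ht₀.1.lt_of_ne ?_
    rintro rfl
    exact (hinit x₀ hx₀Ω).not_gt hM₀
  have ht₀_mem : t₀ ∈ Ioo 0 T := ⟨ht₀_pos, ht₀T.2⟩
  have hmax_space : IsMaxOn (u · t₀) univ x₀ := fun y _ => by
    by_cases hy : y ∈ Ω
    · exact hle y (subset_closure hy) t₀ ht₀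
    · exact (hext y hy t₀ ht₀T).trans hM₀.le
  have hinit_le : u x₀ t₀ ≤ u x₀ 0 :=
    le_initial_of_isMaxOn hα hβ ht₀_mem (hu.uncurry_left x₀ hx₀)
      ((hu_diff x₀ hx₀Ω).contDiffAt (isOpen_Ioo.mem_nhds ht₀_mem))
      (fun s hs => hle x₀ hx₀ s ⟨hs.1, hs.2.trans ht₀.2⟩) hmax_space (hineq x₀ hx₀Ω t₀ ht₀_mem)
  exact (hinit_le.trans (hinit x₀ hx₀Ω)).not_gt hM₀

lemma sSup_parabolicBoundary_nonneg {E : Type*} [NormedAddCommGroup E] [NormedSpace ℝ E]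
    [Nontrivial E] [ProperSpace E] {Ω : Set E} {u : E → ℝ → ℝ} (hT : 0 ≤ T) (hΩ_open : IsOpen Ω)
    (hΩ : Bornology.IsBounded Ω) (hΩ_ne : Ω.Nonempty)
    (hu : ContinuousOn (uncurry u) (closure Ω ×ˢ Icc 0 T)) (hext : ∀ x ∉ Ω, 0 ≤ u x 0) :
    0 ≤ sSup (uncurry u '' parabolicBoundary Ω T) := by
  obtain ⟨y, hy⟩ := nonempty_frontier_of_isBounded hΩ hΩ_ne
  have hyΩ : y ∉ Ω := (hΩ_open.frontier_eq ▸ hy).2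
  exact (hext y hyΩ).trans <| le_csSup ((bddAbove_image_closure_prod_Icc hΩ hu).mono
    (image_mono (parabolicBoundary_subset Ω hT))) ⟨(y, 0), Or.inr ⟨hy, le_rfl, hT⟩, rfl⟩

theorem maximum_principle_general (hα : α ∈ Ico 0 1) (hβ : β ∈ Ioo 0 1) (hT : 0 < T)
    (hΩ : Bornology.IsBounded Ω) (hΩ_ne : Ω.Nonempty)
    (hu_diff : ∀ x ∈ Ω, ContDiffOn ℝ 1 (u x) (Ioo 0 T))
    (hu : ContinuousOn (uncurry u) (closure Ω ×ˢ Icc 0 T))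
    (hext : ∀ x ∉ Ω, ∀ t ∈ Ico 0 T, u x t ≤ sSup (uncurry u '' parabolicBoundary Ω T))
    (hineq : ∀ x ∈ Ω, ∀ t ∈ Ioo 0 T,
      riemannLiouville α (fun s => u x s - u x 0) t + fracLap N β (u · t) x ≤ 0) :
    sSup (uncurry u '' (closure Ω ×ˢ Icc 0 T)) = sSup (uncurry u '' parabolicBoundary Ω T) := by
  have hbdd : BddAbove (uncurry u '' (closure Ω ×ˢ Icc 0 T)) :=
    bddAbove_image_closure_prod_Icc hΩ hu
  have hsub : uncurry u '' parabolicBoundary Ω T ⊆ uncurry u '' (closure Ω ×ˢ Icc 0 T) :=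
    image_mono (parabolicBoundary_subset Ω hT.le)
  have hne : (uncurry u '' parabolicBoundary Ω T).Nonempty :=
    ((hΩ_ne.prod (singleton_nonempty 0)).mono subset_union_left).image _
  have hinit : ∀ x ∈ Ω, u x 0 ≤ sSup (uncurry u '' parabolicBoundary Ω T) := fun x hx =>
    le_csSup (hbdd.mono hsub) ⟨(x, 0), Or.inl ⟨hx, rfl⟩, rfl⟩
  refine le_antisymm (csSup_le (hne.mono hsub) ?_) (csSup_le_csSup hbdd hne hsub)
  rintro _ ⟨⟨x, t⟩, ⟨hx, ht⟩, rfl⟩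
  have hclosure : closure (Ico 0 T) = Icc 0 T := closure_Ico hT.ne
  rw [← hclosure] at ht
  exact le_on_closure (f := u x)
    (fun _ hs => subsolution_le_of_mem_Ico hα hβ hΩ hu_diff hu hineq hinit hext hx hs)
    (hclosure ▸ hu.uncurry_left x hx) continuousOn_const ht

end MaximumPrinciple

/-- Weak maximum principle: the maximum of a subsolution over `closure Q_T`
is attained on the parabolic boundary. -/
theorem maximum_principle (N : ℕ) (hN : 1 ≤ N) (α β T : ℝ)
    (hα : α ∈ Ioo (0:ℝ) 1) (hβ : β ∈ Ioo (0:ℝ) 1) (hT : 0 < T)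
    (Ω : Set (EuclideanSpace ℝ (Fin N)))
    (hΩo : IsOpen Ω) (hΩc : IsConnected Ω) (hΩb : Bornology.IsBounded Ω)
    (u : EuclideanSpace ℝ (Fin N) → ℝ → ℝ)
    (hx : ∀ t ∈ Ioo 0 T, ContDiffOn ℝ 2 (fun x => u x t) Ω)
    (ht : ∀ x ∈ Ω, ContDiffOn ℝ 1 (u x) (Ioo 0 T))
    (hc : ContinuousOn (fun p : EuclideanSpace ℝ (Fin N) × ℝ => u p.1 p.2)
      (closure Ω ×ˢ Icc 0 T))
    (hext : ∀ x ∉ Ω, ∀ t, 0 ≤ t → u x t = 0)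
    -- subsolution inequality in Ω × (0,T]
    (hineq : ∀ x ∈ Ω, ∀ t ∈ Ioc 0 T,
      riemannLiouville α (fun s => u x s - u x 0) t
            + fracLap N β (fun y => u y t) x ≤ 0) :
    sSup ((fun p : EuclideanSpace ℝ (Fin N) × ℝ => u p.1 p.2) ''
        (closure Ω ×ˢ Icc 0 T))
      = sSup ((fun p : EuclideanSpace ℝ (Fin N) × ℝ => u p.1 p.2) ''
        ((Ω ×ˢ ({0} : Set ℝ)) ∪ (frontier Ω ×ˢ Icc 0 T))) := by
  have : Nonempty (Fin N) := ⟨⟨0, hN⟩⟩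
  have hsup : 0 ≤ sSup (uncurry u '' parabolicBoundary Ω T) :=
    sSup_parabolicBoundary_nonneg hT.le hΩo hΩb hΩc.nonempty hc fun y hy => (hext y hy 0 le_rfl).ge
  exact maximum_principle_general (Ioo_subset_Ico_self hα) hβ hT hΩb hΩc.nonempty ht hc
    (fun y hy s hs => (hext y hy s hs.1).trans_le hsup)
    fun y hy s hs => hineq y hy s (Ioo_subset_Ioc_self hs)
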